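/- arXiv:2309.11788 — 8 statements merged into one kernel-verified Lean document; each statement's English description precedes it below -/
import Mathlib

section
/- A parking preference p ∈ {1,…,n}^n is an MVP parking function if and only if it is a classical parking function; that is, all n cars succeed in parking under the MVP parking process if and only if all n cars succeed under the classical parking process. -/
/- Common definitions: the classical and MVP parking processes, parking
functions, inversion graphs and 1-subgraphs, Motzkin paths, and sandpile
configurations on complete graphs. Spots, cars and vertices are 0-indexed
(element `i : Fin n` corresponds to the 1-indexed `i+1` of the paper). -/

namespace MVPPaper

open Finset

variable {n : ℕ}

/-- The first unoccupied spot `k ≥ s` in the occupancy `occ`, if any exists.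
`occ k = some i` means spot `k` is occupied by car `i`. -/
def firstFree (occ : Fin n → Option (Fin n)) (s : Fin n) : Option (Fin n) :=
  (List.finRange n).find? fun k => decide (s ≤ k) && (occ k).isNone

/-- One step of the classical parking process: car `i`, preferring spot `s`,
parks in the first free spot `k ≥ s` (failure if none exists). -/
def classicalStep (occ : Fin n → Option (Fin n)) (i s : Fin n) :
    Option (Fin n → Option (Fin n)) :=
  (firstFree occ s).map fun k => Function.update occ k (some i)

/-- One step of the MVP parking process: car `i` parks in its preferred spot
`s`; if `s` was occupied by an earlier car `j`, then `j` is bumped out and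
drives on to the first free spot `k ≥ s` (failure if none exists). -/
def mvpStep (occ : Fin n → Option (Fin n)) (i s : Fin n) :
    Option (Fin n → Option (Fin n)) :=
  match occ s with
  | none => some (Function.update occ s (some i))
  | some j =>
      (firstFree (Function.update occ s (some i)) s).map fun k =>
        Function.update (Function.update occ s (some i)) k (some j)

/-- Run a parking process: cars `0, 1, …, n-1` enter in order, with car `i`
preferring spot `p i`. Returns the final occupancy, or `none` on failure. -/
def runProcess
    (step : (Fin n → Option (Fin n)) → Fin n → Fin n → Option (Fin n → Option (Fin n)))
    (p : Fin n → Fin n) : Option (Fin n → Option (Fin n)) :=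
  List.foldlM (fun occ i => step occ i (p i)) (fun _ => none) (List.finRange n)

def mvpRun (p : Fin n → Fin n) : Option (Fin n → Option (Fin n)) :=
  runProcess mvpStep p

def classicalRun (p : Fin n → Fin n) : Option (Fin n → Option (Fin n)) :=
  runProcess classicalStep p

/-- All cars park successfully under the MVP process. -/
def IsMVPParking (p : Fin n → Fin n) : Prop := (mvpRun p).isSome

/-- All cars park successfully under the classical process. -/
def IsClassicalParking (p : Fin n → Fin n) : Prop := (classicalRun p).isSome

/-- `MVPOutcome p π` means that the MVP parking process for `p` succeeds, and
car `π i` finally occupies spot `i` for all `i`; that is, `O_MVP(p) = π`. -/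
def MVPOutcome (p : Fin n → Fin n) (π : Equiv.Perm (Fin n)) : Prop :=
  ∃ occ, mvpRun p = some occ ∧ ∀ i, occ i = some (π i)

/-- `p` is a parking function: for every `k`, at least `k+1` cars prefer a spot
`≤ k` (the classical counting characterisation, 0-indexed). -/
def IsParkingFunction (p : Fin n → Fin n) : Prop :=
  ∀ k : Fin n, (k : ℕ) + 1 ≤ (univ.filter fun i => p i ≤ k).card

/-- The fibre of the MVP outcome map over `π`: parking functions with MVP
outcome `π`. -/
def FibMVP (π : Equiv.Perm (Fin n)) : Set (Fin n → Fin n) :=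
  {p | IsParkingFunction p ∧ MVPOutcome p π}

/-- The set of inversions of `π` (where `π i` is the car occupying spot `i`):
pairs `(j, i)` with `j < i` and `π j > π i`. These are the edges of the
inversion graph `G_π`. -/
def invFinset (π : Equiv.Perm (Fin n)) : Finset (Fin n × Fin n) :=
  univ.filter fun e => e.1 < e.2 ∧ π e.2 < π e.1

/-- The left-inversions of `π` at `i`. -/
def lInv (π : Equiv.Perm (Fin n)) (i : Fin n) : Finset (Fin n) :=
  univ.filter fun j => j < i ∧ π i < π j

/-- A 1-subgraph of the inversion graph of `π`: a set of inversions with at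
most one incident left-arc at each vertex. -/
def IsOneSubgraph (π : Equiv.Perm (Fin n)) (S : Finset (Fin n × Fin n)) : Prop :=
  S ⊆ invFinset π ∧ ∀ i j j' : Fin n, (j, i) ∈ S → (j', i) ∈ S → j = j'

/-- The map `Ψ_{Sub→PF}`: the parking preference `p` where `p (π i) = j` if
`(j, i) ∈ S` (for the unique such `j`), and `p (π i) = i` otherwise. -/
noncomputable def subToPF (π : Equiv.Perm (Fin n)) (S : Finset (Fin n × Fin n)) :
    Fin n → Fin n := fun c =>
  if h : ∃ j, (j, π.symm c) ∈ S then h.choose else π.symm c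

/-- The map `Ψ_{PF→Sub}`: the set of inversions `(j, i)` of `π` with
`p (π i) = j`. -/
def pfToSub (π : Equiv.Perm (Fin n)) (p : Fin n → Fin n) : Finset (Fin n × Fin n) :=
  (invFinset π).filter fun e => p (π e.2) = e.1

/-- A 1-subgraph `S` is valid if the MVP outcome of `Ψ_{Sub→PF}(S)` is `π`. -/
def IsValid (π : Equiv.Perm (Fin n)) (S : Finset (Fin n × Fin n)) : Prop :=
  MVPOutcome (subToPF π S) π

/-- `π` contains the pattern `321`. -/
def Contains321 (π : Equiv.Perm (Fin n)) : Prop :=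
  ∃ i j k : Fin n, i < j ∧ j < k ∧ π k < π j ∧ π j < π i

/-- `π` contains the pattern `3412`. -/
def Contains3412 (π : Equiv.Perm (Fin n)) : Prop :=
  ∃ i j k l : Fin n, i < j ∧ j < k ∧ k < l ∧ π k < π l ∧ π l < π i ∧ π i < π j

/-- `S` is `P⃗₂`-free: there is no triple `i < j < k` with `(i,j) ∈ S` and
`(j,k) ∈ S`. -/
def P2Free (S : Finset (Fin n × Fin n)) : Prop :=
  ¬∃ i j k : Fin n, i < j ∧ j < k ∧ (i, j) ∈ S ∧ (j, k) ∈ S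

/-- `S` is horizontally separated (HS): any two distinct edges `(j,i)` and
`(j',i')` of `S` satisfy `i < j'` or `i' < j`. -/
def IsHS (S : Finset (Fin n × Fin n)) : Prop :=
  ∀ e ∈ S, ∀ e' ∈ S, e ≠ e' → e.2 < e'.1 ∨ e'.2 < e.1

/-- Steps of a Motzkin path: up, horizontal, down. -/
inductive MStep : Type
  | U : MStep
  | H : MStep
  | D : MStep
  deriving DecidableEq

/-- The height change of a step. -/
def stepVal : MStep → ℤ
  | MStep.U => 1
  | MStep.H => 0
  | MStep.D => -1

/-- The number of cars preferring spot `j` in `p`. -/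
def prefCount (p : Fin n → Fin n) (j : Fin n) : ℕ :=
  (univ.filter fun i => p i = j).card

/-- The lattice path `Φ(p)`: step `j` is `U`, `H` or `D` according to whether
spot `j` is preferred by at least two, exactly one, or no cars. -/
def Phi (p : Fin n → Fin n) : Fin n → MStep := fun j =>
  if 2 ≤ prefCount p j then MStep.U
  else if prefCount p j = 1 then MStep.H
  else MStep.D

/-- An `n`-step lattice path is a Motzkin path: it ends at height `0` and no
prefix goes below height `0`. -/
def IsMotzkinPath (φ : Fin n → MStep) : Prop :=
  (∑ j : Fin n, stepVal (φ j)) = 0 ∧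
  ∀ k : Fin n, 0 ≤ ∑ j ∈ univ.filter (fun j : Fin n => j ≤ k), stepVal (φ j)

/-- The decreasing permutation `dec_n = n(n-1)⋯1`: spot `i` gets car `n-1-i`
(0-indexed). -/
def decPerm (n : ℕ) : Equiv.Perm (Fin n) :=
  ⟨Fin.rev, Fin.rev, Fin.rev_rev, Fin.rev_rev⟩

/-- A non-crossing matching arc diagram on `{0, …, n-1}`: arcs go left to
right, each vertex is incident to at most one arc, and no two arcs cross. -/
def IsNonCrossMatching (S : Finset (Fin n × Fin n)) : Prop :=
  (∀ e ∈ S, e.1 < e.2) ∧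
  (∀ e ∈ S, ∀ e' ∈ S, e ≠ e' →
    e.1 ≠ e'.1 ∧ e.1 ≠ e'.2 ∧ e.2 ≠ e'.1 ∧ e.2 ≠ e'.2) ∧
  ¬∃ i j k l : Fin n, i < j ∧ j < k ∧ k < l ∧ (i, k) ∈ S ∧ (j, l) ∈ S

/-- A stable configuration `c` (grain counts, each `< n`) on the complete graph
`K_n` is recurrent; by Dhar's burning criterion this amounts on `K_n` to the
existence of an ordering `v` of the vertices with `c (v k) ≥ n - (k+1)` for
every `k` (0-indexed). -/
def IsRecurrentK (c : Fin n → ℕ) : Prop :=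
  (∀ i, c i < n) ∧ ∃ v : Equiv.Perm (Fin n), ∀ k : Fin n, n ≤ c (v k) + (k : ℕ) + 1

theorem aux_ff (a b : Fin n → Option (Fin n)) (h : ∀ k, (a k).isNone = (b k).isNone) (s : Fin n) :
    firstFree a s = firstFree b s := by
  unfold firstFree
  simp only [h]

theorem aux_ff_self (b : Fin n → Option (Fin n)) (s : Fin n) (h : b s = none) :
    firstFree b s = some s := by
  have hs : (List.finRange n).Pairwise (· < ·) := List.pairwise_lt_finRange n
  unfold firstFree
  rw [List.find?_eq_some_iff_append]
  refine ⟨by simp [h], ?_⟩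
  obtain ⟨l₁, l₂, hl⟩ := List.append_of_mem (List.mem_finRange s)
  refine ⟨l₁, l₂, hl, ?_⟩
  intro x hx
  rw [hl, List.pairwise_append] at hs
  have := hs.2.2 x hx s (by simp)
  simp [this]

theorem aux_step (a b : Fin n → Option (Fin n)) (h : ∀ k, (a k).isNone = (b k).isNone)
    (i s : Fin n) :
    (mvpStep a i s = none ∧ classicalStep b i s = none) ∨
    ∃ a' b', mvpStep a i s = some a' ∧ classicalStep b i s = some b' ∧
      ∀ k, (a' k).isNone = (b' k).isNone := by
  unfold mvpStep classicalStep
  cases has : a s with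
  | none =>
    have hb : b s = none := by have := h s; rw [has] at this; simpa using this.symm
    right
    refine ⟨_, _, rfl, by rw [aux_ff_self b s hb]; rfl, ?_⟩
    intro k
    by_cases hk : k = s
    · subst hk; simp
    · simp [Function.update_of_ne hk, h]
  | some j =>
    have h1 : ∀ k, ((Function.update a s (some i)) k).isNone = (b k).isNone := by
      intro k
      by_cases hk : k = s
      · subst hk; rw [← h, has]; simp
      · simp [Function.update_of_ne hk, h]
    simp only [aux_ff _ _ h1]
    cases firstFree b s with
    | none => left; simp
    | some m =>
      right
      refine ⟨_, _, rfl, rfl, ?_⟩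
      intro k
      by_cases hk : k = m
      · subst hk; simp
      · beta_reduce; rw [Function.update_of_ne hk, Function.update_of_ne hk, h1]

theorem aux_fold (p : Fin n → Fin n) (l : List (Fin n)) :
    ∀ (a b : Fin n → Option (Fin n)), (∀ k, (a k).isNone = (b k).isNone) →
    (List.foldlM (fun occ i => mvpStep occ i (p i)) a l).isSome =
    (List.foldlM (fun occ i => classicalStep occ i (p i)) b l).isSome := by
  induction l with
  | nil => intro a b h; rfl
  | cons x l ih =>
    intro a b h
    rw [List.foldlM_cons, List.foldlM_cons]
    rcases aux_step a b h x (p x) with ⟨h1, h2⟩ | ⟨a', b', h1, h2, h3⟩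
    · rw [h1, h2]; rfl
    · rw [h1, h2]; exact ih a' b' h3

/-- A parking preference `p` is an MVP parking function if and
only if it is a classical parking function. -/
theorem statement0 (n : ℕ) (p : Fin n → Fin n) :
    IsMVPParking p ↔ IsClassicalParking p := by
  unfold IsMVPParking IsClassicalParking mvpRun classicalRun runProcess
  rw [aux_fold p _ _ _ (fun _ => rfl)]

end MVPPaper
end

section
/- For every permutation π ∈ S_n: (i) for every 1-subgraph S ∈ Sub(π), Ψ_{Sub→PF}(S) is a parking function, and the map Ψ_{Sub→PF} : Sub(π) → PF_n is injective; (ii) for every parking function p with O_MVP(p) = π, one has Ψ_{Sub→PF}(Ψ_{PF→Sub}(p)) = p; in particular Ψ_{PF→Sub} is injective on the fibre Fib_n(π). -/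
/- Common definitions: the classical and MVP parking processes, parking
functions, inversion graphs and 1-subgraphs, Motzkin paths, and sandpile
configurations on complete graphs. Spots, cars and vertices are 0-indexed
(element `i : Fin n` corresponds to the 1-indexed `i+1` of the paper). -/

namespace MVPPaper

open Finset

variable {n : ℕ}

/-- Occupancy invariant. -/
def OccInv (p : Fin n → Fin n) (occ : Fin n → Option (Fin n)) : Prop :=
  ∀ s c, occ s = some c → p c ≤ s ∧ ∃ c', c ≤ c' ∧ occ (p c) = some c'

lemma step_inv (p : Fin n → Fin n) (occ occ' : Fin n → Option (Fin n)) (i : Fin n)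
    (hI : OccInv p occ) (hlt : ∀ s c, occ s = some c → c < i)
    (h : mvpStep occ i (p i) = some occ') :
    OccInv p occ' ∧ ∀ s c, occ' s = some c → c ≤ i := by
  unfold mvpStep at h
  split at h
  · next h0 =>
    simp only [Option.some.injEq] at h
    subst h
    unfold OccInv at *
    simp only [Function.update_apply]
    grind
  · next j h0 =>
    simp only [Option.map_eq_some_iff] at h
    obtain ⟨k, hk, rfl⟩ := h
    have hk' := List.find?_some hk
    simp only [Function.update_apply, Bool.and_eq_true, decide_eq_true_eq,
      Option.isNone_iff_eq_none] at hk'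
    unfold OccInv at *
    simp only [Function.update_apply]
    grind

lemma fold_inv (p : Fin n → Fin n) (l : List (Fin n)) :
    ∀ occ occ' : Fin n → Option (Fin n), l.Pairwise (· < ·) → OccInv p occ →
      (∀ i ∈ l, ∀ s c, occ s = some c → c < i) →
      List.foldlM (fun occ i => mvpStep occ i (p i)) occ l = some occ' → OccInv p occ' := by
  induction l with
  | nil =>
    intro occ occ' _ hI _ h
    simp at h
    exact h ▸ hI
  | cons i l ih =>
    intro occ occ' hl hI hlt h
    rw [List.foldlM_cons] at h
    obtain ⟨o, ho, h2⟩ := Option.bind_eq_some_iff.mp h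
    obtain ⟨h3, h4⟩ := step_inv p occ o i hI (hlt i (by simp)) ho
    rw [List.pairwise_cons] at hl
    exact ih o occ' hl.2 h3 (fun i' hi' s c hc => lt_of_le_of_lt (h4 s c hc) (hl.1 i' hi')) h2

lemma outcome_inv (p : Fin n → Fin n) (π : Equiv.Perm (Fin n)) (h : MVPOutcome p π) (i : Fin n) :
    p (π i) ≤ i ∧ π i ≤ π (p (π i)) := by
  obtain ⟨occ, h1, h2⟩ := h
  have := fold_inv p (List.finRange n) (fun _ => none) occ (List.pairwise_lt_finRange n)
    (by intro s c h; simp at h) (by simp) h1 i (π i) (h2 i)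
  obtain ⟨a, c', b, hc⟩ := this
  rw [h2] at hc
  simp only [Option.some.injEq] at hc
  exact ⟨a, hc ▸ b⟩

lemma subToPF_cases (π : Equiv.Perm (Fin n)) (S : Finset (Fin n × Fin n)) (i : Fin n) :
    (subToPF π S (π i), i) ∈ S ∨ ((∀ j, (j, i) ∉ S) ∧ subToPF π S (π i) = i) := by
  unfold subToPF
  by_cases h : ∃ j, (j, π.symm (π i)) ∈ S
  · left
    rw [dif_pos h]
    have := h.choose_spec
    simpa using this
  · right
    rw [dif_neg h]
    simpa using h

lemma inverse_fib (π : Equiv.Perm (Fin n)) (p : Fin n → Fin n) (hp : p ∈ FibMVP π) :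
    subToPF π (pfToSub π p) = p := by
  funext c
  obtain ⟨i, rfl⟩ := π.surjective c
  rcases subToPF_cases π (pfToSub π p) i with h | ⟨h, h'⟩
  · simp only [pfToSub, mem_filter] at h
    exact h.2.symm
  · rw [h']
    obtain ⟨a, b⟩ := outcome_inv p π hp.2 i
    by_contra hne
    apply h (p (π i))
    simp only [pfToSub, invFinset, mem_filter, mem_univ, true_and, and_true]
    refine ⟨lt_of_le_of_ne a (Ne.symm hne), lt_of_le_of_ne b fun e => hne (π.injective e)⟩

/-- (i) `Ψ_{Sub→PF}` sends 1-subgraphs to parking functions and is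
injective; (ii) `Ψ_{Sub→PF} ∘ Ψ_{PF→Sub} = id` on the fibre `Fib_n(π)`, and in
particular `Ψ_{PF→Sub}` is injective on the fibre. -/
theorem statement1 (n : ℕ) (π : Equiv.Perm (Fin n)) :
    (∀ S : Finset (Fin n × Fin n), IsOneSubgraph π S →
      IsParkingFunction (subToPF π S)) ∧
    (∀ S S' : Finset (Fin n × Fin n), IsOneSubgraph π S → IsOneSubgraph π S' →
      subToPF π S = subToPF π S' → S = S') ∧
    (∀ p ∈ FibMVP π, subToPF π (pfToSub π p) = p) ∧
    (∀ p ∈ FibMVP π, ∀ p' ∈ FibMVP π, pfToSub π p = pfToSub π p' → p = p') := by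
  refine ⟨?_, ?_, inverse_fib π, ?_⟩
  · intro S hS k
    have hle : ∀ i, subToPF π S (π i) ≤ i := by
      intro i
      rcases subToPF_cases π S i with h | h
      · have := hS.1 h
        simp only [invFinset, mem_filter] at this
        exact this.2.1.le
      · exact h.2.le
    calc (k : ℕ) + 1 = ((Finset.Iic k).map π.toEmbedding).card := by simp
      _ ≤ _ := by
        apply Finset.card_le_card
        intro c hc
        simp only [mem_map, mem_Iic] at hc
        obtain ⟨i, hi, rfl⟩ := hc
        simp only [mem_filter, mem_univ, true_and]
        exact (hle i).trans hi
  · have key : ∀ S S' : Finset (Fin n × Fin n), IsOneSubgraph π S →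
        subToPF π S = subToPF π S' → S ⊆ S' := by
      rintro S S' hS he ⟨j, i⟩ hm
      rcases subToPF_cases π S i with h | h
      · have e := hS.2 i _ _ hm h
        have hlt := hS.1 hm
        simp only [invFinset, mem_filter] at hlt
        rcases subToPF_cases π S' i with h' | h'
        · rw [e, he]
          exact h'
        · rw [← he, ← e] at h'
          exact absurd h'.2 hlt.2.1.ne
      · exact absurd hm (h.1 j)
    intro S S' hS hS' he
    exact (key S S' hS he).antisymm (key S' S hS' he.symm)
  · intro p hp p' hp' h
    rw [← inverse_fib π p hp, ← inverse_fib π p' hp', h]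

end MVPPaper
end

section
/- For a permutation π ∈ S_n, every 1-subgraph of the inversion graph G_π is valid if and only if π avoids both of the patterns 321 and 3412 (equivalently, the inversion graph G_π is acyclic); and in that case |Fib_n(π)| = ∏_{i=1}^{n} (1 + |LInv(π,i)|). -/
/- Common definitions: the classical and MVP parking processes, parking
functions, inversion graphs and 1-subgraphs, Motzkin paths, and sandpile
configurations on complete graphs. Spots, cars and vertices are 0-indexed
(element `i : Fin n` corresponds to the 1-indexed `i+1` of the paper). -/

namespace MVPPaper

open Finset

variable {n : ℕ}

/-- Relational form of one MVP step. -/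
def StepRel (occ : Fin n → Option (Fin n)) (i s : Fin n) (occ' : Fin n → Option (Fin n)) : Prop :=
  (occ s = none ∧ occ' = Function.update occ s (some i)) ∨
  ∃ j k, occ s = some j ∧ s < k ∧ occ k = none ∧ (∀ m, s < m → m < k → occ m ≠ none) ∧
    occ' = Function.update (Function.update occ s (some i)) k (some j)

lemma firstFree_eq_some (occ : Fin n → Option (Fin n)) (s k : Fin n) :
    firstFree occ s = some k ↔ s ≤ k ∧ occ k = none ∧ ∀ m, s ≤ m → m < k → occ m ≠ none := by
  unfold firstFree
  rw [List.find?_eq_some_iff_getElem]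
  constructor
  · rintro ⟨h1, i, hi, hik, h⟩
    simp at hi hik h1
    refine ⟨h1.1, h1.2, ?_⟩
    intro m hm hmk hn
    have := h m.1 (by rw [← hik] at hmk; exact hmk)
    simp [hn] at this
    exact absurd hm (not_le.mpr this)
  · rintro ⟨h1, h2, h3⟩
    refine ⟨by simp [h1, h2], k.1, by simp, by simp, ?_⟩
    intro j hj
    have hjn : j < n := hj.trans k.2
    have := h3 ⟨j, hjn⟩
    simp only [List.getElem_finRange, Bool.not_eq_true', Bool.and_eq_false_iff, decide_eq_false_iff_not]
    by_cases hs : s ≤ ⟨j, hjn⟩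
    · right
      have := this hs hj
      simpa [← Option.ne_none_iff_isSome] using this
    · left
      simpa using hs

lemma exists_firstFree (occ : Fin n → Option (Fin n)) (s k : Fin n) (hs : s ≤ k)
    (hk : occ k = none) : ∃ m, firstFree occ s = some m := by
  rw [← Option.isSome_iff_exists]
  unfold firstFree
  rw [List.find?_isSome]
  exact ⟨k, by simp, by simp [hs, hk]⟩

lemma mvpStep_eq_some (occ : Fin n → Option (Fin n)) (i s : Fin n) (occ' : Fin n → Option (Fin n)) :
    mvpStep occ i s = some occ' ↔ StepRel occ i s occ' := by
  unfold mvpStep StepRel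
  rcases h : occ s with _ | j
  · simp [eq_comm]
  · simp only [Option.map_eq_some_iff, firstFree_eq_some]
    constructor
    · rintro ⟨k, ⟨h1, h2, h3⟩, rfl⟩
      right
      have hks : k ≠ s := by
        rintro rfl
        simp at h2
      refine ⟨j, k, rfl, lt_of_le_of_ne h1 hks.symm, ?_, ?_, rfl⟩
      · simpa [hks] using h2
      · intro m hm hmk
        simpa [hm.ne'] using h3 m hm.le hmk
    · rintro (⟨h, _⟩ | ⟨j', k, hj, h1, h2, h3, rfl⟩)
      · simp at h
      · obtain rfl := Option.some.inj hj
        refine ⟨k, ⟨h1.le, by simpa [h1.ne'] using h2, ?_⟩, rfl⟩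
        intro m hm hmk
        by_cases hms : m = s
        · simp [hms]
        · simpa [hms] using h3 m (lt_of_le_of_ne hm (Ne.symm hms)) hmk

lemma exists_step (occ : Fin n → Option (Fin n)) (i s : Fin n)
    (h : ∀ j, occ s = some j → ∃ k, s < k ∧ occ k = none) : ∃ occ', StepRel occ i s occ' := by
  simp only [← mvpStep_eq_some]
  unfold mvpStep
  rcases hs : occ s with _ | j
  · exact ⟨_, rfl⟩
  · obtain ⟨k, hk, hk2⟩ := h j hs
    obtain ⟨m, hm⟩ := exists_firstFree (Function.update occ s (some i)) s k hk.le
      (by simpa [hk.ne'] using hk2)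
    simp [hm]

def stateAt (p : Fin n → Fin n) (t : ℕ) : Option (Fin n → Option (Fin n)) :=
  List.foldlM (fun occ i => mvpStep occ i (p i)) (fun _ => none) ((List.finRange n).take t)

lemma stateAt_zero (p : Fin n → Fin n) : stateAt p 0 = some (fun _ => none) := by
  simp [stateAt]

lemma stateAt_end (p : Fin n → Fin n) : stateAt p n = mvpRun p := by
  unfold stateAt mvpRun runProcess
  rw [List.take_of_length_le (by simp)]

lemma stateAt_succ (p : Fin n → Fin n) (t : ℕ) (ht : t < n) (o : Fin n → Option (Fin n)) :
    stateAt p (t+1) = some o ↔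
      ∃ o', stateAt p t = some o' ∧ StepRel o' ⟨t, ht⟩ (p ⟨t, ht⟩) o := by
  unfold stateAt
  rw [List.take_succ_eq_append_getElem (by simpa using ht), List.foldlM_append]
  simp [Option.bind_eq_some_iff, mvpStep_eq_some]

/-- Invariant principle for a successful run. -/
lemma run_inv (p : Fin n → Fin n) (P : ℕ → (Fin n → Option (Fin n)) → Prop)
    (h0 : P 0 (fun _ => none))
    (hs : ∀ (t : ℕ) (ht : t < n) o o', P t o → StepRel o ⟨t, ht⟩ (p ⟨t, ht⟩) o' → P (t+1) o') :
    ∀ t, t ≤ n → ∀ o, stateAt p t = some o → P t o := by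
  intro t
  induction t with
  | zero =>
    intro _ o ho
    rw [stateAt_zero] at ho
    obtain rfl := Option.some.inj ho
    exact h0
  | succ t ih =>
    intro ht o ho
    rw [stateAt_succ p t ht] at ho
    obtain ⟨o', h1, h2⟩ := ho
    exact hs t ht o' o (ih (by omega) o' h1) h2

/-- Invariant principle that also shows success. -/
lemma run_exists (p : Fin n → Fin n) (P : ℕ → (Fin n → Option (Fin n)) → Prop)
    (h0 : P 0 (fun _ => none))
    (hs : ∀ (t : ℕ) (ht : t < n) o, P t o →
      ∃ o', StepRel o ⟨t, ht⟩ (p ⟨t, ht⟩) o' ∧ P (t+1) o') :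
    ∀ t, t ≤ n → ∃ o, stateAt p t = some o ∧ P t o := by
  intro t
  induction t with
  | zero => exact fun _ => ⟨_, stateAt_zero p, h0⟩
  | succ t ih =>
    intro ht
    obtain ⟨o, h1, h2⟩ := ih (by omega)
    obtain ⟨o', h3, h4⟩ := hs t ht o h2
    exact ⟨o', (stateAt_succ p t ht o').2 ⟨o, h1, h3⟩, h4⟩

lemma lemA (p : Fin n → Fin n) (π : Equiv.Perm (Fin n)) (h : MVPOutcome p π) :
    (∀ i, p (π i) ≤ i) ∧ ∀ c, c ≤ π (p c) ∧ p (π (p c)) = p c := by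
  obtain ⟨occ, hrun, hocc⟩ := h
  rw [← stateAt_end] at hrun
  have key := run_inv p (fun t o => (∀ x c, o x = some c → c.1 < t ∧ p c ≤ x) ∧
    ∀ c : Fin n, c.1 < t → ∃ d, o (p c) = some d ∧ c ≤ d ∧ p d = p c) (by simp) (by
    rintro t ht o o' ⟨h1, h2⟩ hst
    rcases hst with ⟨hs, rfl⟩ | ⟨j, k, hj, hsk, hk, hm, rfl⟩
    · refine ⟨?_, ?_⟩
      · intro x c hx
        by_cases hxs : x = p ⟨t, ht⟩
        · subst hxs
          simp at hx
          subst hx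
          simp
        · simp [hxs] at hx
          have := h1 x c hx
          exact ⟨by omega, this.2⟩
      · intro c hc
        by_cases hcs : p c = p ⟨t, ht⟩
        · exact ⟨⟨t, ht⟩, by simp [hcs], by rw [Fin.le_def]; simp; omega, hcs.symm⟩
        · have hct : c.1 ≠ t := by
            intro h
            apply hcs
            congr 1
            exact Fin.ext h
          obtain ⟨d, hd⟩ := h2 c (by omega)
          exact ⟨d, by simpa [hcs] using hd.1, hd.2⟩
    · refine ⟨?_, ?_⟩
      · intro x c hx
        by_cases hxk : x = k
        · subst hxk
          simp at hx
          subst hx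
          have := h1 _ _ hj
          exact ⟨by omega, this.2.trans hsk.le⟩
        by_cases hxs : x = p ⟨t, ht⟩
        · subst hxs
          simp [hxk] at hx
          subst hx
          simp
        · simp [hxs, hxk] at hx
          have := h1 x c hx
          exact ⟨by omega, this.2⟩
      · intro c hc
        by_cases hcs : p c = p ⟨t, ht⟩
        · exact ⟨⟨t, ht⟩, by simp [hcs, hsk.ne], by rw [Fin.le_def]; simp; omega, hcs.symm⟩
        · have hct : c.1 ≠ t := by
            intro h
            apply hcs
            congr 1
            exact Fin.ext h
          obtain ⟨d, hd⟩ := h2 c (by omega)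
          have : p c ≠ k := by
            intro h
            rw [h, hk] at hd
            simp at hd
          exact ⟨d, by simpa [hcs, this] using hd.1, hd.2⟩) n le_rfl occ hrun
  refine ⟨fun i => (key.1 i (π i) (hocc i)).2, fun c => ?_⟩
  obtain ⟨d, hd, h1, h2⟩ := key.2 c c.2
  rw [hocc] at hd
  obtain rfl := Option.some.inj hd
  exact ⟨h1, h2⟩

/-- Admissible preferences. -/
def Adm (π : Equiv.Perm (Fin n)) (p : Fin n → Fin n) : Prop :=
  ∀ i, p (π i) = i ∨ (p (π i) < i ∧ π i < π (p (π i)))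

lemma adm_of_outcome (p : Fin n → Fin n) (π : Equiv.Perm (Fin n)) (h : MVPOutcome p π) :
    Adm π p := by
  obtain ⟨h1, h2⟩ := lemA p π h
  intro i
  rcases (h1 i).eq_or_lt with h | h
  · exact Or.inl h
  · refine Or.inr ⟨h, lt_of_le_of_ne (h2 (π i)).1 ?_⟩
    intro h'
    exact h.ne (π.injective h').symm

lemma outcome_of_adm (p : Fin n → Fin n) (π : Equiv.Perm (Fin n)) (h : Adm π p)
    (h321 : ¬ Contains321 π) (h3412 : ¬ Contains3412 π) : MVPOutcome p π := by
  have a321 : ∀ i j k, i < j → j < k → π k < π j → π j < π i → False :=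
    fun i j k a b c d => h321 ⟨i, j, k, a, b, c, d⟩
  have a3412 : ∀ i j k l, i < j → j < k → k < l → π k < π l → π l < π i → π i < π j → False :=
    fun i j k l a b c d e f => h3412 ⟨i, j, k, l, a, b, c, d, e, f⟩
  have key := run_exists p (fun t o =>
    (∀ x i, o x = some (π i) → (π i).1 < t ∧ (x = i ∨ (x < i ∧ π i < π x))) ∧
    (∀ i, (π i).1 < t → ∃ x, o x = some (π i)) ∧
    (∀ x y i, o x = some (π i) → o y = some (π i) → x = y)) (by simp) (by
    rintro t ht o ⟨h1, h2, h3⟩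
    obtain ⟨m, hm⟩ := π.surjective ⟨t, ht⟩
    have hmt : (π m).1 = t := by rw [hm]
    have hp := h m
    rw [← hm]
    -- free spot at destination
    have hbump : ∀ i, o (p (π m)) = some (π i) → p (π m) < i ∧ π i < π (p (π m)) ∧ o i = none := by
      intro i hi
      obtain ⟨ht1, hx⟩ := h1 _ _ hi
      have him : π i < π m := by rw [Fin.lt_def]; omega
      have hA : p (π m) < i ∧ π i < π (p (π m)) := by
        rcases hx with hx | hx
        · exfalso
          rcases hp with hp | hp
          · rw [hx] at hp
            rw [hp] at him
            exact lt_irrefl _ him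
          · rw [hx] at hp
            exact lt_asymm him hp.2
        · exact hx
      refine ⟨hA.1, hA.2, ?_⟩
      rcases ho : o i with _ | c
      · rfl
      · exfalso
        obtain ⟨q, rfl⟩ := π.surjective c
        obtain ⟨hq1, hq2⟩ := h1 _ _ ho
        rcases hq2 with hq2 | hq2
        · subst hq2
          exact hA.1.ne (h3 _ _ _ hi ho)
        · exact a321 _ _ _ hA.1 hq2.1 hq2.2 hA.2
    obtain ⟨o', ho'⟩ := exists_step o (π m) (p (π m)) (by
      intro j hj
      obtain ⟨i, rfl⟩ := π.surjective j
      have := hbump i hj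
      exact ⟨i, this.1, this.2.2⟩)
    refine ⟨o', ho', ?_⟩
    have hnm : ∀ x, o x ≠ some (π m) := by
      intro x hx
      have := (h1 x m hx).1
      omega
    rcases ho' with ⟨hs, rfl⟩ | ⟨j, k, hj, hsk, hk, hmid, rfl⟩
    · generalize hsdef : p (π m) = s at *
      refine ⟨?_, ?_, ?_⟩
      · intro x i hx
        by_cases hxs : x = s
        · subst hxs
          simp at hx
          subst hx
          exact ⟨by omega, by tauto⟩
        · simp [hxs] at hx
          have := h1 x i hx
          exact ⟨by omega, this.2⟩
      · intro i hi
        by_cases him : i = m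
        · subst him
          exact ⟨s, by simp⟩
        · have : (π i).1 ≠ t := by
            intro h'
            exact him (π.injective (Fin.ext (by omega)))
          obtain ⟨x, hx⟩ := h2 i (by omega)
          refine ⟨x, ?_⟩
          have : x ≠ s := by rintro rfl; simp [hs] at hx
          simpa [this] using hx
      · intro x y i hx hy
        simp only [Function.update_apply] at hx hy
        have := h3 x y i
        have := hnm x
        have := hnm y
        grind
    · obtain ⟨i, rfl⟩ := π.surjective j
      obtain ⟨hb1, hb2, hb3⟩ := hbump i hj
      have hti := (h1 _ _ hj).1
      generalize hsdef : p (π m) = s at *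
      have hki : k ≤ i := by
        by_contra hc
        exact hmid i hb1 (not_le.1 hc) hb3
      have hkk : k = i ∨ (k < i ∧ π i < π k) := by
        rcases hki.eq_or_lt with hki | hki
        · exact Or.inl hki
        right
        refine ⟨hki, ?_⟩
        by_contra hc
        have hc : π k < π i := lt_of_le_of_ne (not_lt.1 hc) (fun e => hki.ne (π.injective e))
        obtain ⟨j', hj'⟩ := h2 k (by rw [Fin.lt_def] at hc; omega)
        obtain ⟨_, hx⟩ := h1 _ _ hj'
        rcases hx with hx | ⟨hx1, hx2⟩
        · rw [hx, hk] at hj'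
          simp at hj'
        rcases lt_trichotomy (π j') (π i) with hlt | heq | hgt
        · obtain ⟨y, hy⟩ := h2 j' (by rw [Fin.lt_def] at hlt; omega)
          obtain ⟨_, hy2⟩ := h1 _ _ hy
          rcases hy2 with rfl | hy2
          · rw [hj'] at hy
            have := π.injective (Option.some.inj hy)
            exact hx1.ne this.symm
          · exact a321 _ _ _ hy2.1 hx1 hx2 hy2.2
        · have := π.injective heq
          exact (hx1.trans hki).ne this
        · rcases lt_trichotomy j' s with hl | he | hg
          · rcases lt_trichotomy (π j') (π s) with h5 | h5 | h5
            · exact a3412 _ _ _ _ hl hsk hki hc hgt h5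
            · exact hl.ne (π.injective h5)
            · exact a321 _ _ _ hl hsk (hc.trans hb2) h5
          · subst he
            rw [hj'] at hj
            exact hki.ne (π.injective (Option.some.inj hj))
          · rcases lt_trichotomy (π s) (π j') with h5 | h5 | h5
            · exact a3412 _ _ _ _ hg hx1 hki hc hb2 h5
            · exact hg.ne (π.injective h5)
            · exact a321 _ _ _ hg hx1 hx2 h5
      refine ⟨?_, ?_, ?_⟩
      · intro x i' hx
        by_cases hxk : x = k
        · subst hxk
          simp at hx
          subst hx
          exact ⟨by omega, hkk⟩
        by_cases hxs : x = s
        · subst hxs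
          simp [hxk] at hx
          subst hx
          exact ⟨by omega, by tauto⟩
        · simp [hxs, hxk] at hx
          have := h1 x i' hx
          exact ⟨by omega, this.2⟩
      · intro i' hi
        by_cases him : i' = m
        · subst him
          exact ⟨s, by simp [hsk.ne]⟩
        by_cases hii : i' = i
        · subst hii
          exact ⟨k, by simp⟩
        · have : (π i').1 ≠ t := by
            intro h'
            exact him (π.injective (Fin.ext (by omega)))
          obtain ⟨x, hx⟩ := h2 i' (by omega)
          refine ⟨x, ?_⟩
          have h7 : x ≠ s := by
            rintro rfl
            rw [hj] at hx
            exact hii (π.injective (Option.some.inj hx)).symm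
          have h8 : x ≠ k := by rintro rfl; simp [hk] at hx
          simpa [h7, h8] using hx
      · intro x y i' hx hy
        simp only [Function.update_apply] at hx hy
        have := h3 x y i'
        have := h3 x s i'
        have := h3 y s i'
        have := hnm x
        have := hnm y
        have := hnm s
        grind) n le_rfl
  obtain ⟨o, ho, h1, h2, h3⟩ := key
  refine ⟨o, by rw [← stateAt_end, ho], ?_⟩
  intro i
  induction i using WellFoundedLT.induction with
  | ind i ih =>
    obtain ⟨x, hx⟩ := h2 i (π i).2
    rcases (h1 x i hx).2 with rfl | hlt
    · exact hx
    · rw [ih x hlt.1] at hx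
      exact absurd (π.injective (Option.some.inj hx)) hlt.1.ne

lemma parking_of_adm (p : Fin n → Fin n) (π : Equiv.Perm (Fin n)) (h : Adm π p) :
    IsParkingFunction p := by
  intro k
  have : (Finset.Iic k).map π.toEmbedding ⊆ univ.filter fun i => p i ≤ k := by
    intro c hc
    simp only [mem_map, mem_Iic, Equiv.coe_toEmbedding] at hc
    obtain ⟨i, hi, rfl⟩ := hc
    simp only [mem_filter, mem_univ, true_and]
    rcases h i with h | h
    · rw [h]; exact hi
    · exact h.1.le.trans hi
  have := card_le_card this
  simpa using this

lemma card_adm (π : Equiv.Perm (Fin n)) :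
    {p | Adm π p}.ncard = ∏ i : Fin n, (1 + (lInv π i).card) := by
  have e : {p | Adm π p} = (fun q : Fin n → Fin n => q ∘ π.symm) ''
      (Fintype.piFinset (fun i => insert i (lInv π i)) : Set (Fin n → Fin n)) := by
    ext p
    simp only [Set.mem_ofPred_eq, Set.mem_image, mem_coe, Fintype.mem_piFinset, mem_insert, lInv,
      mem_filter, mem_univ, true_and]
    constructor
    · intro h
      exact ⟨p ∘ π, h, by ext; simp⟩
    · rintro ⟨q, hq, rfl⟩ i
      simpa using hq i
  rw [e, Set.ncard_image_of_injective, Set.ncard_coe_finset, Fintype.card_piFinset]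
  · refine prod_congr rfl fun i _ => ?_
    rw [card_insert_of_notMem (by simp [lInv]), add_comm]
  · intro q q' h
    funext i
    have := congrFun h (π i)
    simpa using this

lemma subToPF_mem (π : Equiv.Perm (Fin n)) (S : Finset (Fin n × Fin n)) (hS : IsOneSubgraph π S)
    (i j : Fin n) (h : (j, i) ∈ S) : subToPF π S (π i) = j := by
  have h' : ∃ j, (j, π.symm (π i)) ∈ S := ⟨j, by simpa using h⟩
  unfold subToPF
  rw [dif_pos h']
  have := h'.choose_spec
  exact hS.2 i _ _ (by simpa using this) h

lemma subToPF_notMem (π : Equiv.Perm (Fin n)) (S : Finset (Fin n × Fin n))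
    (i : Fin n) (h : ∀ j, (j, i) ∉ S) : subToPF π S (π i) = i := by
  unfold subToPF
  rw [dif_neg (by simpa using h)]
  simp

lemma adm_subToPF (π : Equiv.Perm (Fin n)) (S : Finset (Fin n × Fin n)) (hS : IsOneSubgraph π S) :
    Adm π (subToPF π S) := by
  intro i
  by_cases h : ∃ j, (j, i) ∈ S
  · obtain ⟨j, h⟩ := h
    rw [subToPF_mem π S hS i j h]
    have := hS.1 h
    simp [invFinset] at this
    exact Or.inr this
  · left
    exact subToPF_notMem π S i (by simpa using h)

lemma oneSub_pair (π : Equiv.Perm (Fin n)) (a b c d : Fin n) (hab : a < b) (h1 : π b < π a)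
    (hcd : c < d) (h2 : π d < π c) (hbd : b ≠ d) :
    IsOneSubgraph π {(a, b), (c, d)} := by
  constructor
  · intro e he
    simp at he
    rcases he with rfl | rfl <;> simp [invFinset, *]
  · intro i j j' h h'
    simp at h h'
    grind

lemma no321 (π : Equiv.Perm (Fin n))
    (H : ∀ S : Finset (Fin n × Fin n), IsOneSubgraph π S → IsValid π S) : ¬ Contains321 π := by
  rintro ⟨i, j, k, hij, hjk, h1, h2⟩
  have hS := oneSub_pair π i j j k hij h2 hjk h1 hjk.ne
  have hv := (lemA _ π (H _ hS)).2 (π k)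
  rw [subToPF_mem π _ hS k j (by simp), subToPF_mem π _ hS j i (by simp)] at hv
  exact hij.ne hv.2

lemma no3412 (π : Equiv.Perm (Fin n))
    (H : ∀ S : Finset (Fin n × Fin n), IsOneSubgraph π S → IsValid π S) : ¬ Contains3412 π := by
  have a321 : ∀ i j k, i < j → j < k → π k < π j → π j < π i → False :=
    fun i j k a b c d => no321 π H ⟨i, j, k, a, b, c, d⟩
  rintro ⟨i, j, k, l, hij, hjk, hkl, h1, h2, h3⟩
  induction i using WellFoundedGT.induction generalizing j with
  | ind i ih =>
  have hmid : ∀ f, i < f → f < k → f ≠ j → π f < π l := by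
    intro f hif hfk hfj
    by_contra hc
    have hc : π l < π f := lt_of_le_of_ne (not_lt.1 hc)
      (fun e => (hfk.trans hkl).ne (π.injective e).symm)
    rcases lt_or_gt_of_ne hfj with hl | hg
    · rcases lt_trichotomy (π f) (π j) with h5 | h5 | h5
      · exact ih f hif j hl hjk hc h5
      · exact hfj (π.injective h5)
      · exact a321 _ _ _ hl hjk (h1.trans (h2.trans h3)) h5
    · rcases lt_trichotomy (π f) (π j) with h5 | h5 | h5
      · exact a321 _ _ _ hg hfk (h1.trans hc) h5
      · exact hfj (π.injective h5)
      · exact ih j hij f hg hfk (h2.trans h3) h5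
  have hS := oneSub_pair π i l j k (hij.trans (hjk.trans hkl)) h2 hjk (h1.trans (h2.trans h3))
    hkl.ne'
  obtain ⟨occ, hrun, hocc⟩ := H _ hS
  have pl := subToPF_mem π _ hS l i (by simp)
  have pk := subToPF_mem π _ hS k j (by simp)
  have po : ∀ f, f ≠ l → f ≠ k → subToPF π {(i, l), (j, k)} (π f) = f := by
    intro f hf1 hf2
    exact subToPF_notMem π _ f (by simp [hf1, hf2])
  generalize subToPF π {(i, l), (j, k)} = p at *
  have pnk : ∀ c, p c ≠ k := by
    intro c
    obtain ⟨f, rfl⟩ := π.surjective c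
    by_cases hf1 : f = l
    · subst hf1; rw [pl]; exact (hij.trans hjk).ne
    by_cases hf2 : f = k
    · subst hf2; rw [pk]; exact hjk.ne
    rw [po f hf1 hf2]; exact hf2
  -- injectivity before car `π i`
  have pinj : ∀ c d, c < d → d < π i → p c ≠ p d := by
    intro c d hcd hd hp
    obtain ⟨f, rfl⟩ := π.surjective c
    obtain ⟨g, rfl⟩ := π.surjective d
    have e1 := pl
    have e2 := pk
    have e3 := po f
    have e4 := po g
    have : f ≠ g := by rintro rfl; exact lt_irrefl _ hcd
    have : f ≠ i := by rintro rfl; exact lt_asymm hcd hd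
    have : g ≠ i := by rintro rfl; exact lt_irrefl _ hd
    have : f ≠ j := by rintro rfl; exact lt_asymm (hcd.trans hd) h3
    have : g ≠ j := by rintro rfl; exact lt_asymm hd h3
    have := hij.ne
    by_cases f = l <;> by_cases f = k <;> by_cases g = l <;> by_cases g = k <;> grind
  have key := run_inv p (fun t o =>
    (t ≤ (π i).1 → (∀ c : Fin n, c.1 < t → o (p c) = some c) ∧
      (∀ x c, o x = some c → c.1 < t ∧ x = p c)) ∧
    ((π i).1 < t → o k = some (π l))) (by simp) (by
    rintro t ht o o' ⟨h4, h5⟩ hst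
    rcases lt_trichotomy t (π i).1 with hlt | heq | hgt
    · refine ⟨fun _ => ?_, fun h => by omega⟩
      obtain ⟨h6, h7⟩ := h4 hlt.le
      rcases hst with ⟨hs, rfl⟩ | ⟨c, _, hc, _⟩
      · constructor
        · intro c hc
          by_cases hct : c.1 = t
          · have : c = ⟨t, ht⟩ := Fin.ext hct
            subst this
            simp
          · have := h6 c (by omega)
            have h8 : p c ≠ p ⟨t, ht⟩ := by
              intro e
              rw [e, hs] at this
              simp at this
            simpa [h8] using this
        · intro x c hx
          by_cases hxs : x = p ⟨t, ht⟩
          · subst hxs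
            simp at hx
            subst hx
            simp
          · simp [hxs] at hx
            have := h7 x c hx
            exact ⟨by omega, this.2⟩
      · exfalso
        obtain ⟨h8, h9⟩ := h7 _ _ hc
        exact pinj c ⟨t, ht⟩ h8 hlt h9.symm
    · refine ⟨fun h => by omega, fun _ => ?_⟩
      obtain ⟨h6, h7⟩ := h4 heq.le
      have hti : (⟨t, ht⟩ : Fin n) = π i := Fin.ext heq
      have pi : p (π i) = i :=
        po i (hij.trans (hjk.trans hkl)).ne (hij.trans hjk).ne
      have hol : o i = some (π l) := by
        rw [← pl]
        exact h6 _ (by rw [heq]; exact h2)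
      have hok : o k = none := by
        rcases e : o k with _ | c
        · rfl
        · exact absurd (h7 _ _ e).2.symm (pnk c)
      rw [hti, pi] at hst
      rcases hst with ⟨hs, rfl⟩ | ⟨c, m, hc, him, hm, hbet, rfl⟩
      · rw [hs] at hol
        simp at hol
      · rw [hol] at hc
        obtain rfl := Option.some.inj hc
        have hmk : m = k := by
          rcases lt_trichotomy m k with hl | he | hg
          · exfalso
            by_cases hmj : m = j
            · subst hmj
              have := h6 (π k) (by rw [heq]; exact h1.trans h2)
              rw [pk, hm] at this
              simp at this
            · have hml := hmid m him hl hmj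
              have := h6 (π m) (by rw [heq]; exact hml.trans h2)
              rw [po m (hl.trans hkl).ne hl.ne, hm] at this
              simp at this
          · exact he
          · exact absurd hok (hbet k (hij.trans hjk) hg)
        subst hmk
        simp
    · refine ⟨fun h => by omega, fun _ => ?_⟩
      have h6 := h5 hgt
      have hne : k ≠ p ⟨t, ht⟩ := (pnk _).symm
      rcases hst with ⟨hs, rfl⟩ | ⟨c, m, hc, him, hm, hbet, rfl⟩
      · simpa [hne] using h6
      · have : k ≠ m := by
          rintro rfl
          rw [hm] at h6
          simp at h6
        simpa [hne, this] using h6) n le_rfl occ (by rw [stateAt_end, hrun])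
  have := key.2 (π i).2
  rw [hocc] at this
  exact hkl.ne (π.injective (Option.some.inj this))

/-- every 1-subgraph of `G_π` is valid iff `π` avoids the patterns
`321` and `3412`; and in that case `|Fib_n(π)| = ∏ᵢ (1 + |LInv(π,i)|)`. -/
theorem statement3 (n : ℕ) (π : Equiv.Perm (Fin n)) :
    ((∀ S : Finset (Fin n × Fin n), IsOneSubgraph π S → IsValid π S) ↔
      (¬Contains321 π ∧ ¬Contains3412 π)) ∧
    ((¬Contains321 π ∧ ¬Contains3412 π) →
      (FibMVP π).ncard = ∏ i : Fin n, (1 + (lInv π i).card)) := by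
  refine ⟨⟨fun H => ⟨no321 π H, no3412 π H⟩, fun H S hS =>
    outcome_of_adm _ π (adm_subToPF π S hS) H.1 H.2⟩, fun H => ?_⟩
  rw [← card_adm]
  congr 1
  ext p
  exact ⟨fun h => adm_of_outcome p π h.2,
    fun h => ⟨parking_of_adm p π h, outcome_of_adm p π h H.1 H.2⟩⟩

end MVPPaper
end

section
/- Let p be a parking function of length n with MVP outcome π, and let S = Ψ_{PF→Sub}(p) be the associated 1-subgraph. Then the total MVP displacement of p equals the sum of the lengths of the edges of S: disp_MVP(p) = Σ_{(j,i) ∈ S} (i − j), where disp_MVP(p) = Σ_{i=1}^{n} |p_i − π^{-1}(i)| is the sum over all cars of the distance between the car's preferred spot and the spot where it finally parks. -/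
/- Common definitions: the classical and MVP parking processes, parking
functions, inversion graphs and 1-subgraphs, Motzkin paths, and sandpile
configurations on complete graphs. Spots, cars and vertices are 0-indexed
(element `i : Fin n` corresponds to the 1-indexed `i+1` of the paper). -/

namespace MVPPaper

open Finset

variable {n : ℕ}

/-- Invariant of the MVP process. -/
def MVPInv (p : Fin n → Fin n) (occ : Fin n → Option (Fin n)) : Prop :=
  ∀ k c, occ k = some c → p c = k ∨ (p c < k ∧ ∃ d, occ (p c) = some d ∧ c < d)

theorem mvpStep_inv (p : Fin n → Fin n) (occ occ' : Fin n → Option (Fin n)) (i : Fin n)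
    (h : MVPInv p occ) (hlt : ∀ k c, occ k = some c → c < i)
    (hs : mvpStep occ i (p i) = some occ') :
    MVPInv p occ' ∧ ∀ k c, occ' k = some c → c ≤ i := by
  unfold mvpStep at hs
  split at hs
  · rename_i h0
    simp only [Option.some.injEq] at hs
    subst hs
    constructor
    · intro k c hk
      have := h k c
      by_cases hks : k = p i <;> grind [Function.update_apply]
    · intro k c hk
      have := hlt k c
      by_cases hks : k = p i <;> grind [Function.update_apply]
  · rename_i j h0
    rw [Option.map_eq_some_iff] at hs
    obtain ⟨k, hk, rfl⟩ := hs
    unfold firstFree at hk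
    have hk' := List.find?_some hk
    simp only [Bool.and_eq_true, decide_eq_true_eq, Option.isNone_iff_eq_none] at hk'
    obtain ⟨hle, hnone⟩ := hk'
    have hne : k ≠ p i := by
      rintro rfl
      simp at hnone
    have hnone' : occ k = none := by simpa [hne] using hnone
    have hj := h _ _ h0
    have hji := hlt _ _ h0
    have hlt' : p i < k := lt_of_le_of_ne hle (Ne.symm hne)
    clear hk hnone
    constructor
    · intro m c hm
      have h1 := h m c
      have h2 := hlt m c
      by_cases hmk : m = k
      · subst hmk
        simp only [Function.update_self, Option.some.injEq] at hm
        subst hm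
        right
        rcases hj with hj | ⟨hj, d, hd, hjd⟩
        · refine ⟨by omega, i, ?_, hji⟩
          grind [Function.update_apply]
        · refine ⟨by omega, d, ?_, hjd⟩
          grind [Function.update_apply]
      · by_cases hms : m = p i
        · grind [Function.update_apply]
        · grind [Function.update_apply]
    · intro m c hm
      have h2 := hlt m c
      grind [Function.update_apply]

theorem foldlM_inv (p : Fin n → Fin n) (l : List (Fin n)) (hl : l.Pairwise (· < ·)) :
    ∀ (occ occ' : Fin n → Option (Fin n)), MVPInv p occ →
      (∀ i ∈ l, ∀ k c, occ k = some c → c < i) →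
      List.foldlM (fun occ i => mvpStep occ i (p i)) occ l = some occ' → MVPInv p occ' := by
  induction l with
  | nil =>
    intro occ occ' h _ hf
    simp at hf
    exact hf ▸ h
  | cons a l ih =>
    intro occ occ' h hlt hf
    rw [List.foldlM_cons] at hf
    obtain ⟨occ1, h1, h2⟩ := Option.bind_eq_some_iff.mp hf
    obtain ⟨hi, hle⟩ := mvpStep_inv p occ occ1 a h (hlt a (by simp)) h1
    rw [List.pairwise_cons] at hl
    exact ih hl.2 occ1 occ' hi
      (fun i hil k c hk => lt_of_le_of_lt (hle k c hk) (hl.1 i hil)) h2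

/-- the MVP displacement of a parking function equals the sum of
the edge lengths of the associated 1-subgraph `Ψ_{PF→Sub}(p)`. -/
theorem statement4 (n : ℕ) (p : Fin n → Fin n) (π : Equiv.Perm (Fin n))
    (hp : IsParkingFunction p) (hout : MVPOutcome p π) :
    ∑ i : Fin n, (((p i : ℕ) : ℤ) - ((π.symm i : ℕ) : ℤ)).natAbs =
      ∑ e ∈ pfToSub π p, ((e.2 : ℕ) - (e.1 : ℕ)) := by
  obtain ⟨occ, hrun, hocc⟩ := hout
  have hinv : MVPInv p occ := by
    refine foldlM_inv p (List.finRange n) (List.pairwise_lt_finRange n) _ occ ?_ ?_ hrun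
    · intro k c hk
      simp at hk
    · intro i _ k c hk
      simp at hk
  have key : ∀ i, p (π i) = i ∨ (p (π i) < i ∧ π i < π (p (π i))) := by
    intro i
    rcases hinv i (π i) (hocc i) with h | ⟨h, d, hd, hlt⟩
    · exact Or.inl h
    · rw [hocc, Option.some.injEq] at hd
      exact Or.inr ⟨h, hd ▸ hlt⟩
  rw [← Equiv.sum_comp π]
  have himg : pfToSub π p =
      (univ.filter fun i => p (π i) < i).image (fun i => (p (π i), i)) := by
    ext ⟨j, i⟩
    simp only [pfToSub, invFinset, mem_filter, mem_univ, true_and, mem_image, Prod.mk.injEq]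
    constructor
    · rintro ⟨⟨h1, h2⟩, rfl⟩
      exact ⟨i, h1, rfl, rfl⟩
    · rintro ⟨a, h1, rfl, rfl⟩
      rcases key a with h | h
      · omega
      · exact ⟨h, rfl⟩
  rw [himg, sum_image (fun a _ b _ h => (Prod.mk.inj h).2), sum_filter]
  refine sum_congr rfl fun i _ => ?_
  rw [Equiv.symm_apply_apply]
  rcases key i with h | ⟨h, _⟩
  · simp [h]
  · rw [if_pos h]
    dsimp only
    omega

end MVPPaper
end

section
/- Let π ∈ S_n and let S be a 1-subgraph of the inversion graph G_π. If S is horizontally separated (HS), i.e., for any two distinct edges (j,i) and (j',i') of S (with j < i and j' < i') either i < j' or i' < j, then S is valid. Consequently, |Fib_n(π)| ≥ |{S ∈ Sub(π) : S is HS}|. -/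
/- Common definitions: the classical and MVP parking processes, parking
functions, inversion graphs and 1-subgraphs, Motzkin paths, and sandpile
configurations on complete graphs. Spots, cars and vertices are 0-indexed
(element `i : Fin n` corresponds to the 1-indexed `i+1` of the paper). -/

namespace MVPPaper

open Finset

variable {n : ℕ}

theorem firstFree_eq (occ : Fin n → Option (Fin n)) (s m : Fin n) (h1 : s ≤ m)
    (h2 : occ m = none) (h3 : ∀ u, s ≤ u → u < m → occ u ≠ none) :
    firstFree occ s = some m := by
  unfold firstFree
  rw [List.find?_eq_some_iff_getElem]
  refine ⟨by simp [h1, h2], m.1, by simp, by simp, ?_⟩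
  intro j hj
  have hjn : j < n := by omega
  have := h3 ⟨j, hjn⟩
  simp only [List.getElem_finRange, Fin.cast_mk]
  by_cases hs : s ≤ ⟨j, hjn⟩
  · have h4 := this hs (by simpa [Fin.lt_def] using hj)
    simp [hs, Option.isSome_iff_ne_none.2 h4]
  · simp [hs]

/-- location of a displaced car -/
def AtLoc (π : Equiv.Perm (Fin n)) (t : ℕ) (j i s : Fin n) : Prop :=
  j ≤ s ∧ s ≤ i ∧ (∀ u, j ≤ u → u < s → (π u : ℕ) < t) ∧ (s = i ∨ t ≤ (π s : ℕ))

/-- invariant of the process -/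
structure PInv (π : Equiv.Perm (Fin n)) (S : Finset (Fin n × Fin n)) (t : ℕ)
    (occ : Fin n → Option (Fin n)) : Prop where
  h1 : ∀ s, (∀ j, (j, s) ∉ S) → (π s : ℕ) < t → occ s = some (π s)
  h2 : ∀ j i s, (j, i) ∈ S → (π i : ℕ) < t → AtLoc π t j i s → occ s = some (π i)
  h3 : ∀ s, occ s ≠ none → ((∀ j, (j, s) ∉ S) ∧ (π s : ℕ) < t) ∨
    ∃ j i, (j, i) ∈ S ∧ (π i : ℕ) < t ∧ AtLoc π t j i s

theorem atLoc_unique {π : Equiv.Perm (Fin n)} {t : ℕ} {j i s s' : Fin n}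
    (h : AtLoc π t j i s) (h' : AtLoc π t j i s') : s = s' := by
  obtain ⟨a, b, c, d⟩ := h
  obtain ⟨a', b', c', d'⟩ := h'
  rcases lt_trichotomy s s' with hl | hl | hl
  · have := c' s a hl
    rcases d with d | d
    · subst d; exact absurd hl (not_lt.2 b')
    · omega
  · exact hl
  · have := c s' a' hl
    rcases d' with d' | d'
    · subst d'; exact absurd hl (not_lt.2 b)
    · omega

theorem sep {S : Finset (Fin n × Fin n)} (hS : IsHS S) {j i j' i' s : Fin n}
    (h : (j, i) ∈ S) (h' : (j', i') ∈ S) (a : j ≤ s) (b : s ≤ i) (a' : j' ≤ s) (b' : s ≤ i') :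
    j = j' ∧ i = i' := by
  by_contra hc
  have := hS _ h _ h' (by simpa using hc)
  rcases this with this | this
  · exact absurd (this.trans_le a') (not_lt.2 b)
  · exact absurd (this.trans_le a) (not_lt.2 b')

theorem inv_edge {π : Equiv.Perm (Fin n)} {S : Finset (Fin n × Fin n)} (hS : IsOneSubgraph π S)
    {j i : Fin n} (h : (j, i) ∈ S) : j < i ∧ π i < π j := by
  simpa [invFinset] using hS.1 h

theorem subToPF_edge {π : Equiv.Perm (Fin n)} {S : Finset (Fin n × Fin n)}
    (hS : IsOneSubgraph π S) {j i : Fin n} (h : (j, i) ∈ S) : subToPF π S (π i) = j := by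
  have hex : ∃ j, (j, π.symm (π i)) ∈ S := ⟨j, by simpa using h⟩
  unfold subToPF
  rw [dif_pos hex]
  exact hS.2 (π.symm (π i)) _ _ hex.choose_spec (by simpa using h)

theorem subToPF_non {π : Equiv.Perm (Fin n)} {S : Finset (Fin n × Fin n)}
    {i : Fin n} (h : ∀ j, (j, i) ∉ S) : subToPF π S (π i) = i := by
  unfold subToPF
  rw [dif_neg (by simpa using h)]
  simp

theorem ne_val {π : Equiv.Perm (Fin n)} {a b : Fin n} (h : a ≠ b) : (π a : ℕ) ≠ (π b : ℕ) := by
  intro h'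
  exact h (π.injective (Fin.ext h'))

theorem atLoc_succ {π : Equiv.Perm (Fin n)} {j i s k : Fin n}
    (h : AtLoc π (π k : ℕ) j i s) (hk : s ≠ k) : AtLoc π ((π k : ℕ) + 1) j i s := by
  obtain ⟨a, b, c, d⟩ := h
  refine ⟨a, b, fun u h1 h2 => (c u h1 h2).trans (Nat.lt_succ_self _), ?_⟩
  have := ne_val (π := π) hk
  rcases d with d | d
  · exact Or.inl d
  · right; omega

theorem atLoc_pred {π : Equiv.Perm (Fin n)} {j i s k : Fin n}
    (h : AtLoc π ((π k : ℕ) + 1) j i s) (hk : ¬ (j ≤ k ∧ k < s)) : AtLoc π (π k : ℕ) j i s := by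
  obtain ⟨a, b, c, d⟩ := h
  refine ⟨a, b, fun u h1 h2 => ?_, ?_⟩
  · have hu : u ≠ k := by rintro rfl; exact hk ⟨h1, h2⟩
    have := ne_val (π := π) hu
    have := c u h1 h2
    omega
  · rcases d with d | d
    · exact Or.inl d
    · right; omega

theorem step_inv_s6 {π : Equiv.Perm (Fin n)} {S : Finset (Fin n × Fin n)}
    (hS : IsOneSubgraph π S) (hH : IsHS S) (k : Fin n) (occ : Fin n → Option (Fin n))
    (I : PInv π S (π k : ℕ) occ) :
    ∃ occ', mvpStep occ (π k) (subToPF π S (π k)) = some occ' ∧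
      PInv π S ((π k : ℕ) + 1) occ' := by
  by_cases hk : ∃ j, (j, k) ∈ S
  · obtain ⟨j, hj⟩ := hk
    obtain ⟨jk, pk⟩ := inv_edge hS hj
    have pk' : (π k : ℕ) < π j := pk
    rw [subToPF_edge hS hj]
    have hnone : occ j = none := by
      by_contra hne
      rcases I.h3 j hne with ⟨_, h⟩ | ⟨j', i', he, hlt, hat⟩
      · omega
      · have := (sep hH hj he le_rfl jk.le hat.1 hat.2.1).2
        subst this; omega
    refine ⟨Function.update occ j (some (π k)), by simp [mvpStep, hnone], ?_, ?_, ?_⟩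
    · intro s hs hlt
      have hsk : s ≠ k := by rintro rfl; exact hs _ hj
      have hsj : s ≠ j := by rintro rfl; omega
      have := ne_val (π := π) hsk
      rw [Function.update_of_ne hsj]
      exact I.h1 s hs (by omega)
    · intro j' i' s he hlt hat
      by_cases hik : i' = k
      · subst hik
        have := hS.2 _ _ _ he hj
        subst this
        have : s = j' := by
          by_contra hne
          have := hat.2.2.1 j' le_rfl (lt_of_le_of_ne hat.1 (Ne.symm hne))
          omega
        subst this; simp
      · have hsj : s ≠ j := by
          rintro rfl
          exact hik (sep hH hj he le_rfl jk.le hat.1 hat.2.1).2.symm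
        have := ne_val (π := π) hik
        rw [Function.update_of_ne hsj]
        refine I.h2 j' i' s he (by omega) (atLoc_pred hat ?_)
        rintro ⟨q1, q2⟩
        exact hik (sep hH hj he jk.le le_rfl q1 (q2.le.trans hat.2.1)).2.symm
    · intro s hs
      by_cases hsj : s = j
      · subst hsj
        right
        exact ⟨s, k, hj, by omega, le_rfl, jk.le, fun u a b => absurd b (not_lt.2 a),
          Or.inr (by omega)⟩
      · rw [Function.update_of_ne hsj] at hs
        rcases I.h3 s hs with ⟨a, b⟩ | ⟨j', i', he, hlt, hat⟩
        · left; exact ⟨a, by omega⟩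
        · right
          refine ⟨j', i', he, by omega, atLoc_succ hat ?_⟩
          rintro rfl
          have := (sep hH hj he jk.le le_rfl hat.1 hat.2.1).2
          subst this; omega
  · push Not at hk
    rw [subToPF_non hk]
    have hik : ∀ {j i}, (j, i) ∈ S → i ≠ k := by
      rintro j i h rfl; exact hk _ h
    rcases hock : occ k with _ | d
    · refine ⟨Function.update occ k (some (π k)), by simp [mvpStep, hock], ?_, ?_, ?_⟩
      · intro s hs hlt
        by_cases hsk : s = k
        · subst hsk; simp
        · have := ne_val (π := π) hsk
          rw [Function.update_of_ne hsk]
          exact I.h1 s hs (by omega)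
      · intro j' i' s he hlt hat
        have h4 := ne_val (π := π) (hik he)
        have hsk : s ≠ k := by
          rintro rfl
          rcases hat.2.2.2 with h | h
          · exact hik he h.symm
          · omega
        rw [Function.update_of_ne hsk]
        refine I.h2 j' i' s he (by omega) (atLoc_pred hat ?_)
        rintro ⟨q1, q2⟩
        have : AtLoc π (π k : ℕ) j' i' k := by
          refine ⟨q1, q2.le.trans hat.2.1, fun u a b => ?_, Or.inr le_rfl⟩
          have := hat.2.2.1 u a (b.trans q2)
          have := ne_val (π := π) b.ne
          omega
        have := I.h2 j' i' k he (by omega) this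
        simp [hock] at this
      · intro s hs
        by_cases hsk : s = k
        · subst hsk
          left; exact ⟨hk, by omega⟩
        · rw [Function.update_of_ne hsk] at hs
          rcases I.h3 s hs with ⟨a, b⟩ | ⟨j', i', he, hlt, hat⟩
          · left; exact ⟨a, by omega⟩
          · right; exact ⟨j', i', he, by omega, atLoc_succ hat hsk⟩
    · obtain ⟨j, i, he, hlt, hat⟩ : ∃ j i, (j, i) ∈ S ∧ (π i : ℕ) < π k ∧ AtLoc π (π k) j i k := by
        rcases I.h3 k (by simp [hock]) with ⟨_, h⟩ | h
        · omega
        · exact h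
      have hd : d = π i := by
        have := I.h2 j i k he hlt hat
        rw [hock] at this
        exact Option.some.inj this
      subst hd
      have hki : k < i := lt_of_le_of_ne hat.2.1 (hik he).symm
      obtain ⟨m, ⟨hkm, hmi, hm⟩, hmin⟩ : ∃ m, (k < m ∧ m ≤ i ∧ (m = i ∨ (π k : ℕ) + 1 ≤ π m)) ∧
          ∀ u, u < m → ¬ (k < u ∧ u ≤ i ∧ (u = i ∨ (π k : ℕ) + 1 ≤ π u)) := by
        let P : Fin n → Prop := fun m => k < m ∧ m ≤ i ∧ (m = i ∨ (π k : ℕ) + 1 ≤ π m)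
        have hP : ∃ m, P m := ⟨i, hki, le_rfl, Or.inl rfl⟩
        exact ⟨WellFounded.min wellFounded_lt {m | P m} hP, WellFounded.min_mem wellFounded_lt {m | P m} hP,
          fun u hu hPu => WellFounded.not_lt_min wellFounded_lt {m | P m} hPu hu⟩
      have hjm : j ≤ m := hat.1.trans hkm.le
      have hmid : ∀ u, k < u → u < m → (π u : ℕ) < π k := by
        intro u a b
        have h5 := hmin u b
        have := ne_val (π := π) a.ne
        by_contra hc
        exact h5 ⟨a, b.le.trans hmi, Or.inr (by omega)⟩
      have hatm : AtLoc π ((π k : ℕ) + 1) j i m := by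
        refine ⟨hjm, hmi, fun u a b => ?_, hm⟩
        rcases lt_trichotomy u k with h | h | h
        · have := hat.2.2.1 u a h
          omega
        · subst h; omega
        · have := hmid u h b
          omega
      have hmnone : occ m = none := by
        by_contra hne
        rcases I.h3 m hne with ⟨a, b⟩ | ⟨j', i', he', hlt', hat'⟩
        · rcases hm with hm | hm
          · subst hm; exact a _ he
          · omega
        · obtain ⟨rfl, rfl⟩ := sep hH he he' hjm hmi hat'.1 hat'.2.1
          exact hkm.ne (atLoc_unique hat hat')
      have hff : firstFree (Function.update occ k (some (π k))) k = some m := by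
        apply firstFree_eq _ _ _ hkm.le
        · rw [Function.update_of_ne hkm.ne', hmnone]
        · intro u a b
          rcases a.eq_or_lt with rfl | a
          · simp
          · rw [Function.update_of_ne a.ne', I.h1 u ?_ (hmid u a b)]
            · simp
            · intro j' hj'
              have h6 := (inv_edge hS hj').1
              have := (sep hH he hj' (hat.1.trans a.le) (b.le.trans hmi) h6.le le_rfl).2
              exact absurd (b.trans_le hmi) (by rw [this]; exact lt_irrefl _)
      refine ⟨Function.update (Function.update occ k (some (π k))) m (some (π i)),
        by simp [mvpStep, hock, hff], ?_, ?_, ?_⟩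
      · intro s hs hlt'
        have hsm : s ≠ m := by
          rintro rfl
          rcases hm with hm | hm
          · subst hm; exact hs _ he
          · omega
        rw [Function.update_of_ne hsm]
        by_cases hsk : s = k
        · subst hsk; simp
        · have := ne_val (π := π) hsk
          rw [Function.update_of_ne hsk]
          exact I.h1 s hs (by omega)
      · intro j' i' s he' hlt' hat'
        by_cases hii : i' = i
        · subst hii
          have := hS.2 _ _ _ he he'
          subst this
          have := atLoc_unique hatm hat'
          subst this; simp
        · have hsm : s ≠ m := by
            rintro rfl
            exact hii (sep hH he he' hjm hmi hat'.1 hat'.2.1).2.symm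
          have hnk : ¬ (j' ≤ k ∧ k ≤ i') := fun ⟨a, b⟩ =>
            hii (sep hH he he' hat.1 hat.2.1 a b).2.symm
          have hsk : s ≠ k := by
            rintro rfl
            exact hnk ⟨hat'.1, hat'.2.1⟩
          have := ne_val (π := π) (hik he')
          rw [Function.update_of_ne hsm, Function.update_of_ne hsk]
          exact I.h2 j' i' s he' (by omega)
            (atLoc_pred hat' fun ⟨a, b⟩ => hnk ⟨a, b.le.trans hat'.2.1⟩)
      · intro s hs
        by_cases hsm : s = m
        · subst hsm
          right; exact ⟨j, i, he, by omega, hatm⟩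
        rw [Function.update_of_ne hsm] at hs
        by_cases hsk : s = k
        · subst hsk
          left; exact ⟨hk, by omega⟩
        rw [Function.update_of_ne hsk] at hs
        rcases I.h3 s hs with ⟨a, b⟩ | ⟨j', i', he', hlt', hat'⟩
        · left; exact ⟨a, by omega⟩
        · right; exact ⟨j', i', he', by omega, atLoc_succ hat' hsk⟩

theorem run_inv_s6 {π : Equiv.Perm (Fin n)} {S : Finset (Fin n × Fin n)}
    (hS : IsOneSubgraph π S) (hH : IsHS S) (t : ℕ) (ht : t ≤ n) :
    ∃ occ, List.foldlM (fun occ i => mvpStep occ i (subToPF π S i)) (fun _ => none)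
      ((List.finRange n).take t) = some occ ∧ PInv π S t occ := by
  induction t with
  | zero =>
    refine ⟨fun _ => none, by simp, ?_, ?_, ?_⟩
    · intro s _ h; omega
    · intro j i s _ h; omega
    · intro s h; simp at h
  | succ t ih =>
    obtain ⟨occ, h1, h2⟩ := ih (by omega)
    have hk : π (π.symm ⟨t, ht⟩) = ⟨t, ht⟩ := by simp
    obtain ⟨occ', h3, h4⟩ := step_inv_s6 hS hH (π.symm ⟨t, ht⟩) occ (by rw [hk]; exact h2)
    rw [hk] at h3 h4
    refine ⟨occ', ?_, h4⟩
    rw [List.take_succ_eq_append_getElem (by simpa using ht), List.foldlM_append, h1]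
    simpa using h3

theorem hs_valid {π : Equiv.Perm (Fin n)} {S : Finset (Fin n × Fin n)}
    (hS : IsOneSubgraph π S) (hH : IsHS S) : IsValid π S := by
  obtain ⟨occ, h1, h2⟩ := run_inv_s6 hS hH n le_rfl
  refine ⟨occ, ?_, ?_⟩
  · rw [List.take_of_length_le (by simp)] at h1
    exact h1
  · intro i
    by_cases hi : ∃ j, (j, i) ∈ S
    · obtain ⟨j, hj⟩ := hi
      exact h2.h2 j i i hj (π i).2 ⟨(inv_edge hS hj).1.le, le_rfl, fun u _ _ => (π u).2, Or.inl rfl⟩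
    · push Not at hi
      exact h2.h1 i hi (π i).2

theorem sub_isPF {π : Equiv.Perm (Fin n)} {S : Finset (Fin n × Fin n)}
    (hS : IsOneSubgraph π S) : IsParkingFunction (subToPF π S) := by
  intro k
  have hle : ∀ i, subToPF π S (π i) ≤ i := by
    intro i
    by_cases hi : ∃ j, (j, i) ∈ S
    · obtain ⟨j, hj⟩ := hi
      rw [subToPF_edge hS hj]; exact (inv_edge hS hj).1.le
    · push Not at hi
      rw [subToPF_non hi]
  have : ((Finset.Iic k).map π.toEmbedding) ⊆ univ.filter fun i => subToPF π S i ≤ k := by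
    intro c hc
    simp only [Finset.mem_map, Finset.mem_Iic] at hc
    obtain ⟨i, hi, rfl⟩ := hc
    simpa using (hle i).trans hi
  have := Finset.card_le_card this
  simpa using this

theorem sub_mem {π : Equiv.Perm (Fin n)} {S : Finset (Fin n × Fin n)}
    (hS : IsOneSubgraph π S) (j i : Fin n) :
    (j, i) ∈ S ↔ subToPF π S (π i) = j ∧ j ≠ i := by
  constructor
  · intro h
    exact ⟨subToPF_edge hS h, (inv_edge hS h).1.ne⟩
  · rintro ⟨h, hne⟩
    by_cases hi : ∃ j, (j, i) ∈ S
    · obtain ⟨j', hj⟩ := hi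
      rw [subToPF_edge hS hj] at h
      subst h; exact hj
    · push Not at hi
      rw [subToPF_non hi] at h
      exact absurd h.symm hne

/-- every horizontally separated 1-subgraph is valid; consequently
`|Fib_n(π)|` is at least the number of HS 1-subgraphs. -/
theorem statement6 (n : ℕ) (π : Equiv.Perm (Fin n)) :
    (∀ S : Finset (Fin n × Fin n), IsOneSubgraph π S → IsHS S → IsValid π S) ∧
    {S : Finset (Fin n × Fin n) | IsOneSubgraph π S ∧ IsHS S}.ncard ≤
      (FibMVP π).ncard := by
  refine ⟨fun S hS hH => hs_valid hS hH, ?_⟩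
  refine Set.ncard_le_ncard_of_injOn (subToPF π) ?_ ?_ (Set.toFinite _)
  · rintro S ⟨hS, hH⟩
    exact ⟨sub_isPF hS, hs_valid hS hH⟩
  · rintro S ⟨hS, _⟩ T ⟨hT, _⟩ heq
    ext ⟨j, i⟩
    rw [sub_mem hS, sub_mem hT, heq]

end MVPPaper
end

section
/- For every permutation π ∈ S_n, the size of the MVP fibre satisfies |Fib_n(π)| ≥ 1 + |Inv(π)|, where Inv(π) is the set of inversions of π. -/
/- Common definitions: the classical and MVP parking processes, parking
functions, inversion graphs and 1-subgraphs, Motzkin paths, and sandpile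
configurations on complete graphs. Spots, cars and vertices are 0-indexed
(element `i : Fin n` corresponds to the 1-indexed `i+1` of the paper). -/

namespace MVPPaper

open Finset

variable {n : ℕ}

theorem firstFree_spec (occ : Fin n → Option (Fin n)) (s i : Fin n) (hsi : s ≤ i)
    (hi : occ i = none) :
    ∃ k, firstFree occ s = some k ∧ s ≤ k ∧ k ≤ i ∧ occ k = none := by
  unfold firstFree
  cases h : (List.finRange n).find? (fun k => decide (s ≤ k) && (occ k).isNone) with
  | none =>
    rw [List.find?_eq_none] at h
    have := h i (List.mem_finRange i)
    simp [hsi, hi] at this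
  | some k =>
    refine ⟨k, rfl, ?_⟩
    rw [List.find?_eq_some_iff_getElem] at h
    obtain ⟨hk, m, hm, hmk, hlt⟩ := h
    simp at hk hmk
    refine ⟨hk.1, ?_, hk.2⟩
    by_contra hc
    push Not at hc
    have := hlt i (by subst hmk; exact Fin.lt_def.1 hc)
    simp [hsi, hi] at this

theorem run_inv_s7 (p : Fin n → Fin n) (P : ℕ → (Fin n → Option (Fin n)) → Prop)
    (h0 : P 0 (fun _ => none))
    (hs : ∀ (c : Fin n) occ, P c occ → ∃ occ', mvpStep occ c (p c) = some occ' ∧ P (c + 1) occ') :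
    ∃ occ, mvpRun p = some occ ∧ P n occ := by
  have key : ∀ m ≤ n, ∃ occ, List.foldlM (fun occ i => mvpStep occ i (p i)) (fun _ => none)
      ((List.finRange n).take m) = some occ ∧ P m occ := by
    intro m
    induction m with
    | zero => intro _; exact ⟨_, by simp, h0⟩
    | succ m ih =>
      intro hm
      obtain ⟨occ, ho, hP⟩ := ih (by omega)
      obtain ⟨occ', ho', hP'⟩ := hs ⟨m, hm⟩ occ hP
      refine ⟨occ', ?_, hP'⟩
      rw [List.take_succ_eq_append_getElem (by simpa using hm), List.foldlM_append, ho]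
      simp [ho']
  obtain ⟨occ, ho, hP⟩ := key n le_rfl
  refine ⟨occ, ?_, hP⟩
  rw [List.take_of_length_le (by simp)] at ho
  exact ho

theorem mem_fib (π : Equiv.Perm (Fin n)) (i j : Fin n) (h : j = i ∨ (j < i ∧ π i < π j)) :
    Function.update (⇑π.symm) (π i) j ∈ FibMVP π := by
  have hji : j ≤ i := by rcases h with h | h; exacts [h.le, h.1.le]
  have hpi : j = i ∨ (π i : ℕ) < π j := by
    rcases h with h | h; exacts [Or.inl h, Or.inr h.2]
  constructor
  · intro k
    have : (univ.filter fun c => π.symm c ≤ k).card = (k : ℕ) + 1 := by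
      rw [← Fin.card_Iic k]
      apply Finset.card_bij (fun c _ => π.symm c)
      · simp
      · simp
      · intro b hb; exact ⟨π b, by simpa using hb, by simp⟩
    rw [← this]
    apply Finset.card_le_card
    intro c
    simp only [mem_filter, mem_univ, true_and]
    intro hc
    by_cases hci : c = π i
    · subst hci; simp at hc ⊢; exact hji.trans hc
    · simpa [hci] using hc
  · refine Exists.imp ?_ (run_inv_s7 (Function.update (⇑π.symm) (π i) j)
      (fun m occ => (m ≤ π i ∧ ∀ k, occ k = if (π k : ℕ) < m then some (π k) else none) ∨
        ((π i : ℕ) < m ∧ ∃ s ≤ i, (s = i ∨ m ≤ π s) ∧ ∀ k, occ k = if k = s then some (π i) else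
          if (π k : ℕ) < m ∧ k ≠ i then some (π k) else none))
      (by left; simp) ?_)
    · rintro occ ⟨ho, hP⟩
      refine ⟨ho, ?_⟩
      rcases hP with ⟨h1, _⟩ | ⟨_, s, hs, hs', hocc⟩
      · have := (π i).isLt; omega
      · have : s = i := by
          rcases hs' with h | h
          · exact h
          · have := (π s).isLt; omega
        subst this
        intro k
        rw [hocc]
        by_cases hk : k = s <;> simp [hk]
    · intro c occ hP
      obtain ⟨k, rfl⟩ := π.surjective c
      have hinj : ∀ l, (π l : ℕ) = π k → l = k := fun l hl => π.injective (Fin.ext hl)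
      rcases hP with ⟨h1, hocc⟩ | ⟨h1, s, hs, hs', hocc⟩
      · by_cases hki : k = i
        · subst hki
          have hj : occ j = none := by
            rw [hocc, if_neg]
            rcases hpi with h | h
            · simp [h]
            · omega
          refine ⟨Function.update occ j (some (π k)), by simp [mvpStep, hj], Or.inr
            ⟨by omega, j, hji, by omega, ?_⟩⟩
          intro l
          by_cases hl : l = j
          · subst hl; simp
          · have := hinj l
            rw [Function.update_of_ne hl, hocc, if_neg hl]
            by_cases hlk : l = k
            · subst hlk; simp
            · have : (π l : ℕ) < π k ↔ (π l : ℕ) < π k + 1 := by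
                have : (π l : ℕ) ≠ π k := fun h => hlk (this h)
                omega
              simp [hlk, this]
        · have hne : π k ≠ π i := fun h => hki (π.injective h)
          have hne' : (π k : ℕ) ≠ π i := fun h => hne (Fin.ext h)
          refine ⟨Function.update occ k (some (π k)), ?_, Or.inl ⟨by omega, ?_⟩⟩
          · have : occ k = none := by simp [hocc]
            simp [mvpStep, Function.update_of_ne hne, this]
          · intro l
            by_cases hl : l = k
            · subst hl; simp
            · have h3 : (π l : ℕ) ≠ π k := fun h => hl (hinj l h)
              have : (π l : ℕ) < π k ↔ (π l : ℕ) < π k + 1 := by omega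
              rw [Function.update_of_ne hl, hocc]
              simp only [this]
      · have hki : k ≠ i := by rintro rfl; omega
        have hne : π k ≠ π i := fun h => hki (π.injective h)
        have hiff : ∀ l, l ≠ k → ((π l : ℕ) < π k ↔ (π l : ℕ) < π k + 1) := by
          intro l hl
          have h3 : (π l : ℕ) ≠ π k := fun h => hl (hinj l h)
          omega
        by_cases hks : k = s
        · subst hks
          have hok : occ k = some (π i) := by simp [hocc]
          obtain ⟨k', hf, h4, h5, h6⟩ := firstFree_spec (Function.update occ k (some (π k))) k i hs
            (by rw [Function.update_of_ne (Ne.symm hki), hocc]; simp [Ne.symm hki])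
          have hk' : k' ≠ k := by rintro rfl; simp at h6
          rw [Function.update_of_ne hk', hocc, if_neg hk'] at h6
          refine ⟨Function.update (Function.update occ k (some (π k))) k' (some (π i)), ?_,
            Or.inr ⟨by omega, k', h5, ?_, ?_⟩⟩
          · simp [mvpStep, Function.update_of_ne hne, hok, hf]
          · by_cases h7 : k' = i
            · exact Or.inl h7
            · right
              have := hiff k' hk'
              simp [h7] at h6
              have h6' : (π k : ℕ) ≤ π k' := h6
              omega
          · intro l
            by_cases hl : l = k'
            · subst hl; simp
            · rw [Function.update_of_ne hl, if_neg hl]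
              by_cases hlk : l = k
              · subst hlk; simp [hki]
              · rw [Function.update_of_ne hlk, hocc, if_neg hlk]
                simp only [hiff l hlk]
        · have hok : occ k = none := by simp [hocc, hks]
          refine ⟨Function.update occ k (some (π k)), ?_, Or.inr ⟨by omega, s, hs, ?_, ?_⟩⟩
          · simp [mvpStep, Function.update_of_ne hne, hok]
          · rcases hs' with h | h
            · exact Or.inl h
            · right
              have := hiff s (Ne.symm hks)
              omega
          · intro l
            by_cases hlk : l = k
            · subst hlk; simp [hki, hks]
            · rw [Function.update_of_ne hlk, hocc]
              simp only [hiff l hlk]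

/-- `|Fib_n(π)| ≥ 1 + |Inv(π)|`. -/
theorem statement7 (n : ℕ) (π : Equiv.Perm (Fin n)) :
    1 + (invFinset π).card ≤ (FibMVP π).ncard := by
  classical
  have hinj : Set.InjOn (fun e : Fin n × Fin n => Function.update (⇑π.symm) (π e.2) e.1)
      (invFinset π) := by
    rintro ⟨a, b⟩ h1 ⟨c, d⟩ h2 h
    simp only [invFinset, coe_filter, mem_univ, true_and, Set.mem_ofPred_eq] at h1 h2 h
    have h3 := congrFun h (π b)
    by_cases hbd : b = d
    · subst hbd; simp at h3; simp [h3]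
    · have : π b ≠ π d := fun h => hbd (π.injective h)
      rw [Function.update_self, Function.update_of_ne this] at h3
      simp at h3
      exact absurd h1.1 (by simp [h3])
  have hnot : (⇑π.symm) ∉ (invFinset π).image
      (fun e : Fin n × Fin n => Function.update (⇑π.symm) (π e.2) e.1) := by
    simp only [mem_image, not_exists, not_and]
    rintro ⟨a, b⟩ h1 h
    simp only [invFinset, mem_filter, mem_univ, true_and] at h1
    have h3 := congrFun h (π b)
    simp at h3
    exact absurd h1.1 (by simp [h3])
  rw [← Finset.card_image_of_injOn hinj, add_comm, ← Finset.card_insert_of_notMem hnot,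
    ← Set.ncard_coe_finset]
  apply Set.ncard_le_ncard _ (Set.toFinite _)
  intro p hp
  simp only [coe_insert, coe_image, Set.mem_insert_iff, Set.mem_image, mem_coe] at hp
  rcases hp with rfl | ⟨⟨a, b⟩, h1, rfl⟩
  · rcases Nat.eq_zero_or_pos n with rfl | hn
    · exact ⟨fun k => k.elim0, _, rfl, fun k => k.elim0⟩
    · have := mem_fib π ⟨0, hn⟩ ⟨0, hn⟩ (Or.inl rfl)
      rwa [Function.update_eq_self_iff.2 (by simp)] at this
  · simp only [invFinset, mem_filter, mem_univ, true_and] at h1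
    exact mem_fib π b a (Or.inr h1)

end MVPPaper
end

section
/- Let p be a parking preference of length n that is a parking function. Then every spot is preferred by at most two cars (i.e., |{i : p_i = j}| ≤ 2 for all j ∈ {1,…,n}) if and only if the associated lattice path Φ(p) is a Motzkin path. -/
/- Common definitions: the classical and MVP parking processes, parking
functions, inversion graphs and 1-subgraphs, Motzkin paths, and sandpile
configurations on complete graphs. Spots, cars and vertices are 0-indexed
(element `i : Fin n` corresponds to the 1-indexed `i+1` of the paper). -/

namespace MVPPaper

open Finset

variable {n : ℕ}

theorem stepVal_Phi_le (p : Fin n → Fin n) (j : Fin n) :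
    stepVal (Phi p j) ≤ (prefCount p j : ℤ) - 1 := by
  unfold Phi
  split_ifs <;> simp only [stepVal] <;> omega

theorem stepVal_Phi_eq_iff (p : Fin n → Fin n) (j : Fin n) :
    stepVal (Phi p j) = (prefCount p j : ℤ) - 1 ↔ prefCount p j ≤ 2 := by
  unfold Phi
  split_ifs <;> simp only [stepVal] <;> omega

theorem sum_prefCount (p : Fin n → Fin n) (s : Finset (Fin n)) :
    ∑ j ∈ s, prefCount p j = (univ.filter fun i => p i ∈ s).card := by
  rw [Finset.card_eq_sum_card_fiberwise (f := p) (t := s) (fun i hi => by simpa using hi)]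
  refine Finset.sum_congr rfl fun j hj => ?_
  unfold prefCount
  congr 1
  ext i
  simp only [mem_filter, mem_univ, true_and]
  constructor
  · rintro rfl
    exact ⟨hj, rfl⟩
  · exact fun h => h.2

theorem sum_prefCount_sub (p : Fin n → Fin n) :
    ∑ j, ((prefCount p j : ℤ) - 1) = 0 := by
  have h := sum_prefCount p univ
  simp only [mem_univ, filter_true, card_univ, Fintype.card_fin] at h
  rw [Finset.sum_sub_distrib, ← Nat.cast_sum, h]
  simp

/-- a parking function `p` has every spot preferred by at most two
cars iff `Φ(p)` is a Motzkin path. -/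
theorem statement8 (n : ℕ) (p : Fin n → Fin n) (hp : IsParkingFunction p) :
    (∀ j, prefCount p j ≤ 2) ↔ IsMotzkinPath (Phi p) := by
  constructor
  · intro h
    have he : ∀ j, stepVal (Phi p j) = (prefCount p j : ℤ) - 1 :=
      fun j => (stepVal_Phi_eq_iff p j).2 (h j)
    refine ⟨?_, fun k => ?_⟩
    · simp only [he]
      exact sum_prefCount_sub p
    · simp only [he]
      have h1 := sum_prefCount p (univ.filter fun j : Fin n => j ≤ k)
      have h2 := hp k
      simp only [mem_filter, mem_univ, true_and] at h1
      have h3 : (univ.filter fun j : Fin n => j ≤ k).card = (k : ℕ) + 1 := by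
        rw [← Fin.card_Iic k]
        congr 1
        ext j
        simp
      rw [Finset.sum_sub_distrib, ← Nat.cast_sum, h1, Finset.sum_const, h3]
      simp only [nsmul_eq_mul, mul_one]
      omega
  · rintro ⟨h, -⟩ j
    rw [← stepVal_Phi_eq_iff]
    exact (Finset.sum_eq_sum_iff_of_le fun i _ => stepVal_Phi_le p i).1
      (h.trans (sum_prefCount_sub p).symm) j (mem_univ j)

end MVPPaper
end

section
/- The map Φ induces a bijection from the set of equivalence classes of Motzkin parking functions of length n under rearrangement onto the set Motz_n of Motzkin paths of length n: (i) for Motzkin parking functions p, p', Φ(p) = Φ(p') if and only if p and p' are rearrangements of each other (have the same multiset of entries); (ii) for every Motzkin path φ of length n there exists a Motzkin parking function p of length n with Φ(p) = φ. -/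
/- Common definitions: the classical and MVP parking processes, parking
functions, inversion graphs and 1-subgraphs, Motzkin paths, and sandpile
configurations on complete graphs. Spots, cars and vertices are 0-indexed
(element `i : Fin n` corresponds to the 1-indexed `i+1` of the paper). -/

namespace MVPPaper

open Finset

variable {n : ℕ}

/-- Number of cars encoded by a step. -/
def stepCount : MStep → ℕ
  | MStep.U => 2
  | MStep.H => 1
  | MStep.D => 0

lemma stepCount_cast (s : MStep) : (stepCount s : ℤ) = stepVal s + 1 := by
  cases s <;> rfl

lemma phi_count (p : Fin n → Fin n) (j : Fin n) (h : prefCount p j ≤ 2) :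
    prefCount p j = stepCount (Phi p j) := by
  unfold Phi
  split_ifs with h1 h2
  · simp only [stepCount]; omega
  · simp only [stepCount]; omega
  · simp only [stepCount]; omega

lemma exists_perm (p p' : Fin n → Fin n) (h : ∀ j, prefCount p j = prefCount p' j) :
    ∃ σ : Equiv.Perm (Fin n), p' = p ∘ σ := by
  have e : ∀ j, Nonempty ({i // p' i = j} ≃ {i // p i = j}) := fun j => by
    apply Fintype.card_eq.1
    rw [Fintype.card_subtype, Fintype.card_subtype]
    exact (h j).symm
  let f := fun j => (e j).some
  refine ⟨(Equiv.sigmaFiberEquiv p').symm.trans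
    ((Equiv.sigmaCongrRight f).trans (Equiv.sigmaFiberEquiv p)), ?_⟩
  funext i
  exact ((f (p' i)) ⟨i, rfl⟩).2.symm

lemma prefCount_comp (p : Fin n → Fin n) (σ : Equiv.Perm (Fin n)) (j : Fin n) :
    prefCount (p ∘ σ) j = prefCount p j := by
  unfold prefCount
  apply Finset.card_bij (fun i _ => σ i)
  · intro a ha; simpa using ha
  · intro a _ b _ hab; exact σ.injective hab
  · intro b hb; exact ⟨σ.symm b, by simpa using hb, by simp⟩

lemma exists_pref (c : Fin n → ℕ) (h : ∑ j, c j = n) :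
    ∃ p : Fin n → Fin n, ∀ j, prefCount p j = c j := by
  have e : Nonempty (Fin n ≃ (Σ j : Fin n, Fin (c j))) := by
    apply Fintype.card_eq.1
    simp [h]
  obtain ⟨e⟩ := e
  refine ⟨fun i => (e i).1, fun j => ?_⟩
  unfold prefCount
  rw [← Fintype.card_subtype, ← Fintype.card_fin (c j)]
  apply Fintype.card_congr
  exact (e.subtypeEquiv (q := fun x => x.1 = j) (fun _ => Iff.rfl)).trans
    (Equiv.sigmaSubtype (β := fun j : Fin n => Fin (c j)) j)

lemma card_le_eq (p : Fin n → Fin n) (k : Fin n) :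
    (univ.filter fun i => p i ≤ k).card =
      ∑ j ∈ univ.filter (fun j : Fin n => j ≤ k), prefCount p j := by
  rw [Finset.card_eq_sum_card_fiberwise (f := p) (t := univ.filter (fun j : Fin n => j ≤ k))]
  · apply Finset.sum_congr rfl
    intro j hj
    unfold prefCount
    congr 1
    ext i
    simp only [mem_filter, mem_univ, true_and] at hj ⊢
    constructor
    · exact fun h => h.2
    · rintro rfl; exact ⟨hj, rfl⟩
  · intro i hi; simpa using hi

/-- `Φ` induces a bijection from rearrangement classes of Motzkin
parking functions onto Motzkin paths: (i) two Motzkin parking functions have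
the same image under `Φ` iff they are rearrangements of each other; (ii) every
Motzkin path is the image of some Motzkin parking function. -/
theorem statement9 (n : ℕ) :
    (∀ p p' : Fin n → Fin n,
      IsParkingFunction p → (∀ j, prefCount p j ≤ 2) →
      IsParkingFunction p' → (∀ j, prefCount p' j ≤ 2) →
      (Phi p = Phi p' ↔ ∃ σ : Equiv.Perm (Fin n), p' = p ∘ σ)) ∧
    (∀ φ : Fin n → MStep, IsMotzkinPath φ →
      ∃ p : Fin n → Fin n, IsParkingFunction p ∧ (∀ j, prefCount p j ≤ 2) ∧
        Phi p = φ) := by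
  refine ⟨fun p p' _ h2 _ h2' => ⟨fun h => ?_, ?_⟩, fun φ hφ => ?_⟩
  · apply exists_perm
    intro j
    rw [phi_count p j (h2 j), phi_count p' j (h2' j), h]
  · rintro ⟨σ, rfl⟩
    funext j
    simp only [Phi, prefCount_comp]
  · have hs : ∑ j, stepCount (φ j) = n := by
      have : ((∑ j, stepCount (φ j) : ℕ) : ℤ) = n := by
        push_cast
        simp only [stepCount_cast, Finset.sum_add_distrib, hφ.1]
        simp
      exact_mod_cast this
    obtain ⟨p, hp⟩ := exists_pref (fun j => stepCount (φ j)) hs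
    refine ⟨p, fun k => ?_, fun j => ?_, ?_⟩
    · rw [card_le_eq]
      have h0 := hφ.2 k
      have hc : (univ.filter (fun j : Fin n => j ≤ k)).card = (k : ℕ) + 1 := by
        rw [← Fin.card_Iic k]; congr 1; ext; simp
      zify
      simp only [hp, stepCount_cast, Finset.sum_add_distrib, Finset.sum_const, hc]
      simp only [nsmul_eq_mul, mul_one]
      push_cast
      linarith
    · rw [hp]; cases φ j <;> simp [stepCount]
    · funext j
      simp only [Phi, hp]
      cases φ j <;> simp [stepCount]

end MVPPaper
end
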